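/- arXiv:2602.06168 — 3 statements merged into one kernel-verified Lean document; each statement's English description precedes it below -/
import Mathlib

section
/- Let μ > 0. The sequence (L_n(e_0, ·))_n, where e_0 is the constant function 1, converges uniformly on [0,1] to the constant function 1; that is, sup_{x ∈ [0,1]} |ln_μ(x) · Σ_{k=0}^n (1/ln_μ(k/n)) · p_{n,k}(a_n(x)) − 1| → 0 as n → ∞. -/
open Real Filter Set

/-- `logμ μ x = ln(1+μ+x)`. -/
noncomputable def logμ (μ x : ℝ) : ℝ := Real.log (1 + μ + x)

/-- `a μ n x = ln(1 + x/(n(1+μ))) / ln(1 + 1/(n(1+μ)))`. -/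
noncomputable def aFun (μ : ℝ) (n : ℕ) (x : ℝ) : ℝ :=
  Real.log (1 + x / (n * (1 + μ))) / Real.log (1 + 1 / (n * (1 + μ)))

/-- Bernstein basis polynomial `p_{n,k}(y) = C(n,k) y^k (1-y)^(n-k)`. -/
noncomputable def pB (n k : ℕ) (y : ℝ) : ℝ :=
  (n.choose k : ℝ) * y ^ k * (1 - y) ^ (n - k)

/-- Classical Bernstein operator. -/
noncomputable def Bop (n : ℕ) (g : ℝ → ℝ) (y : ℝ) : ℝ :=
  ∑ k ∈ Finset.range (n + 1), g ((k : ℝ) / (n : ℝ)) * pB n k y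

/-- Bernstein-type logarithmic operator `L_n`. -/
noncomputable def Lop (μ : ℝ) (n : ℕ) (f : ℝ → ℝ) (x : ℝ) : ℝ :=
  logμ μ x * ∑ k ∈ Finset.range (n + 1),
    f ((k : ℝ) / (n : ℝ)) * (1 / logμ μ ((k : ℝ) / (n : ℝ))) * pB n k (aFun μ n x)

lemma aFun_bounds (μ : ℝ) (hμ : 0 < μ) (n : ℕ) (hn : n ≠ 0) (x : ℝ) (hx : x ∈ Set.Icc (0:ℝ) 1) :
    aFun μ n x ∈ Set.Icc (0:ℝ) 1 ∧ |aFun μ n x - x| ≤ 1 / (n * (1 + μ)) := by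
  obtain ⟨h0, h1⟩ := hx
  have hn' : (0:ℝ) < n := by exact_mod_cast Nat.pos_of_ne_zero hn
  have hc : 0 < 1 / ((n:ℝ) * (1 + μ)) := by positivity
  have hxc : x / ((n:ℝ) * (1 + μ)) = x * (1 / ((n:ℝ) * (1 + μ))) := by ring
  unfold aFun
  rw [hxc]
  generalize 1 / ((n:ℝ) * (1 + μ)) = c at hc
  have hxc0 : 0 ≤ x * c := by positivity
  have hxc1 : x * c ≤ c := by nlinarith
  have hl : 0 < Real.log (1 + c) := Real.log_pos (by linarith)
  have hlx : 0 ≤ Real.log (1 + x * c) := Real.log_nonneg (by linarith)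
  have hle : Real.log (1 + x * c) ≤ Real.log (1 + c) :=
    Real.log_le_log (by linarith) (by linarith)
  have u1 : Real.log (1 + c) ≤ c := by
    have := Real.log_le_sub_one_of_pos (show 0 < 1 + c by linarith); linarith
  have u2 : Real.log (1 + x * c) ≤ x * c := by
    have := Real.log_le_sub_one_of_pos (show 0 < 1 + x * c by linarith); linarith
  have l1 : c ≤ Real.log (1 + c) * (1 + c) := by
    have := Real.one_sub_inv_le_log_of_pos (show 0 < 1 + c by linarith)
    have h := mul_le_mul_of_nonneg_right this (show 0 ≤ 1 + c by linarith)
    rw [sub_mul, inv_mul_cancel₀ (by linarith)] at h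
    linarith
  have l2 : x * c ≤ Real.log (1 + x * c) * (1 + x * c) := by
    have := Real.one_sub_inv_le_log_of_pos (show 0 < 1 + x * c by linarith)
    have h := mul_le_mul_of_nonneg_right this (show 0 ≤ 1 + x * c by linarith)
    rw [sub_mul, inv_mul_cancel₀ (by linarith)] at h
    linarith
  refine ⟨⟨by positivity, (div_le_one hl).2 hle⟩, ?_⟩
  rw [abs_le]
  constructor
  · have : x - c ≤ Real.log (1 + x * c) / Real.log (1 + c) := by
      rw [le_div_iff₀ hl]
      have h3 : x * Real.log (1 + c) ≤ x * c := mul_le_mul_of_nonneg_left u1 h0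
      have h4 : Real.log (1 + x * c) * (x * c) ≤ Real.log (1 + c) * c :=
        mul_le_mul hle hxc1 hxc0 hl.le
      nlinarith
    linarith
  · have : Real.log (1 + x * c) / Real.log (1 + c) ≤ x + c := by
      rw [div_le_iff₀ hl]
      have h3 : x * c ≤ x * (Real.log (1 + c) * (1 + c)) := mul_le_mul_of_nonneg_left l1 h0
      have h4 : x * c * Real.log (1 + c) ≤ c * Real.log (1 + c) :=
        mul_le_mul_of_nonneg_right hxc1 hl.le
      nlinarith
    linarith

theorem stmt7 (μ : ℝ) (hμ : 0 < μ) :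
    TendstoUniformlyOn (fun (n : ℕ) (x : ℝ) => Lop μ n (fun _ => (1:ℝ)) x)
      (fun _ => (1:ℝ)) atTop (Set.Icc (0:ℝ) 1) := by
  have hlog : ∀ y : ℝ, 0 ≤ y → 0 < Real.log (1 + μ + y) := fun y hy =>
    Real.log_pos (by linarith)
  let g : C(unitInterval, ℝ) := ⟨fun y => 1 / Real.log (1 + μ + (y:ℝ)), by
    refine Continuous.div continuous_const (Continuous.log (by fun_prop) ?_) ?_
    · intro y
      have := y.2.1
      positivity
    · intro y
      exact (hlog y y.2.1).ne'⟩
  have hM : 0 < Real.log (1 + μ + 1) := hlog 1 zero_le_one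
  rw [Metric.tendstoUniformlyOn_iff]
  intro ε hε
  obtain ⟨η, hη, hηM⟩ : ∃ η > 0, Real.log (1 + μ + 1) * (η + η) = ε :=
    ⟨ε / (2 * Real.log (1 + μ + 1)), by positivity, by field_simp; ring⟩
  have hB := (Metric.tendsto_nhds.1 (bernsteinApproximation_uniform g)) η hη
  obtain ⟨δ, hδ, hg⟩ := Metric.uniformContinuous_iff.1
    (CompactSpace.uniformContinuous_of_continuous (map_continuous g)) η hη
  have hlim : Tendsto (fun n : ℕ => 1 / ((n:ℝ) * (1 + μ))) atTop (nhds 0) := by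
    have := tendsto_const_div_atTop_nhds_zero_nat (1 / (1 + μ))
    refine this.congr fun n => ?_
    rw [div_div, mul_comm]
  filter_upwards [hB, hlim.eventually_lt_const hδ, eventually_ne_atTop 0] with n hn hnδ hn0 x hx
  obtain ⟨ha, hax⟩ := aFun_bounds μ hμ n hn0 x hx
  have e : Lop μ n (fun _ => (1:ℝ)) x =
      Real.log (1 + μ + x) * bernsteinApproximation n g ⟨aFun μ n x, ha⟩ := by
    rw [bernsteinApproximation.apply, Lop, Finset.sum_range]
    simp only [logμ]
    congr 1
    refine Finset.sum_congr rfl fun k _ => ?_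
    rw [bernstein_apply, smul_eq_mul, mul_comm, one_mul]
    rfl
  have hlx := hlog x hx.1
  have e1 : (1:ℝ) = Real.log (1 + μ + x) * g ⟨x, hx⟩ := by
    change (1:ℝ) = Real.log (1 + μ + x) * (1 / Real.log (1 + μ + x))
    field_simp
  have d1 := (ContinuousMap.dist_apply_le_dist (f := bernsteinApproximation n g) (g := g)
    ⟨aFun μ n x, ha⟩).trans_lt hn
  have d2 : dist (g ⟨aFun μ n x, ha⟩) (g ⟨x, hx⟩) < η := by
    apply hg
    rw [Subtype.dist_eq, Real.dist_eq]
    exact hax.trans_lt hnδ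
  have d3 := dist_triangle (bernsteinApproximation n g ⟨aFun μ n x, ha⟩)
    (g ⟨aFun μ n x, ha⟩) (g ⟨x, hx⟩)
  have hle : Real.log (1 + μ + x) ≤ Real.log (1 + μ + 1) :=
    Real.log_le_log (by linarith [hx.1]) (by linarith [hx.2])
  rw [dist_comm, e]
  nth_rw 2 [e1]
  rw [Real.dist_eq, ← mul_sub, abs_mul, abs_of_pos hlx, ← Real.dist_eq, ← hηM]
  exact mul_lt_mul_of_le_of_lt_of_nonneg_of_pos hle (by linarith) dist_nonneg hM
end

section
/- Let μ > 0, n a positive integer, and f : [0,1] → ℝ continuous. Then for every x ∈ [0,1], |L_n(f, x) − f(x)| ≤ ln(2+μ) · ω(f_μ, 1/√n) · (2 + √n · γ_n), where f_μ(t) := f(t)/ln(1+μ+t), γ_n := max_{x ∈ [0,1]} (a_n(x) − x), and ω(g, δ) := sup{ |g(x) − g(y)| : x, y ∈ [0,1], |x − y| ≤ δ } is the modulus of continuity. -/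
open Real Filter Set

/-- Modulus of continuity of `g` on `[0,1]`. -/
noncomputable def modCont (g : ℝ → ℝ) (δ : ℝ) : ℝ :=
  sSup {d : ℝ | ∃ x ∈ Set.Icc (0:ℝ) 1, ∃ y ∈ Set.Icc (0:ℝ) 1, |x - y| ≤ δ ∧ d = |g x - g y|}

/-- `γ_n := max_{x ∈ [0,1]} (a_n(x) - x)`. -/
noncomputable def gammaN (μ : ℝ) (n : ℕ) : ℝ :=
  sSup ((fun x => aFun μ n x - x) '' Set.Icc (0:ℝ) 1)

lemma modBdd (g : ℝ → ℝ) (hg : ContinuousOn g (Set.Icc (0:ℝ) 1)) (δ : ℝ) :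
    BddAbove {d : ℝ | ∃ x ∈ Set.Icc (0:ℝ) 1, ∃ y ∈ Set.Icc (0:ℝ) 1,
      |x - y| ≤ δ ∧ d = |g x - g y|} := by
  obtain ⟨C, hC⟩ := isCompact_Icc.exists_bound_of_continuousOn hg
  refine ⟨C + C, ?_⟩
  rintro d ⟨x, hx, y, hy, -, rfl⟩
  have h1 := hC x hx
  have h2 := hC y hy
  rw [Real.norm_eq_abs] at h1 h2
  exact (abs_sub _ _).trans (add_le_add h1 h2)

lemma mod_le (g : ℝ → ℝ) (hg : ContinuousOn g (Set.Icc (0:ℝ) 1)) (δ : ℝ) {x y : ℝ}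
    (hx : x ∈ Set.Icc (0:ℝ) 1) (hy : y ∈ Set.Icc (0:ℝ) 1) (h : |x - y| ≤ δ) :
    |g x - g y| ≤ modCont g δ :=
  le_csSup (modBdd g hg δ) ⟨x, hx, y, hy, h, rfl⟩

lemma mod_nat (g : ℝ → ℝ) (hg : ContinuousOn g (Set.Icc (0:ℝ) 1)) (δ : ℝ) (m : ℕ) :
    ∀ x ∈ Set.Icc (0:ℝ) 1, ∀ y ∈ Set.Icc (0:ℝ) 1, |x - y| ≤ m * δ →
    |g x - g y| ≤ m * modCont g δ := by
  induction m with
  | zero =>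
    intro x _ y _ h
    have h0 : |x - y| = 0 := le_antisymm (by simpa using h) (abs_nonneg _)
    have : x = y := sub_eq_zero.mp (abs_eq_zero.mp h0)
    simp [this]
  | succ m ih =>
    intro x hx y hy h
    push_cast at h ⊢
    have hm : (0:ℝ) < (m:ℝ) + 1 := by positivity
    set c : ℝ := (m:ℝ) / (m + 1) with hc
    have hc0 : 0 ≤ c := by positivity
    have hc1 : 1 - c = 1 / (m + 1) := by rw [hc]; field_simp; ring
    have hc1' : 0 ≤ 1 - c := by rw [hc1]; positivity
    have hz : c * x + (1 - c) * y ∈ Set.Icc (0:ℝ) 1 :=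
      (convex_Icc (0:ℝ) 1) hx hy hc0 hc1' (by ring)
    have hd : |x - y| / (m + 1) ≤ δ := by rw [div_le_iff₀ hm]; linarith
    have h1 := ih _ hz y hy (by
      have : c * x + (1 - c) * y - y = c * (x - y) := by ring
      rw [this, abs_mul, abs_of_nonneg hc0]
      calc c * |x - y| = m * (|x - y| / (m + 1)) := by rw [hc]; ring
        _ ≤ m * δ := by gcongr)
    have h2 := mod_le g hg δ hx hz (by
      have : x - (c * x + (1 - c) * y) = (1 - c) * (x - y) := by ring
      rw [this, abs_mul, abs_of_nonneg hc1', hc1]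
      calc 1 / ((m:ℝ) + 1) * |x - y| = (|x - y| / (m + 1)) := by ring
        _ ≤ δ := hd)
    have h3 := abs_sub_le (g x) (g (c * x + (1 - c) * y)) (g y)
    linarith

lemma mod_nonneg (g : ℝ → ℝ) (δ : ℝ) : 0 ≤ modCont g δ := by
  apply Real.sSup_nonneg
  rintro d ⟨x, _, y, _, _, rfl⟩
  exact abs_nonneg _

lemma mod_real (g : ℝ → ℝ) (hg : ContinuousOn g (Set.Icc (0:ℝ) 1)) (s : ℝ) (hs : 0 < s)
    {x y : ℝ} (hx : x ∈ Set.Icc (0:ℝ) 1) (hy : y ∈ Set.Icc (0:ℝ) 1) :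
    |g x - g y| ≤ (1 + s * |x - y|) * modCont g (1 / s) := by
  have h0 : 0 ≤ s * |x - y| := by positivity
  have h1 := mod_nat g hg (1 / s) ⌈s * |x - y|⌉₊ x hx y hy (by
    rw [mul_one_div, le_div_iff₀ hs]
    have := Nat.le_ceil (s * |x - y|)
    linarith)
  refine h1.trans (mul_le_mul_of_nonneg_right ?_ (mod_nonneg _ _))
  have := (Nat.ceil_lt_add_one h0).le
  linarith

lemma pB_eval (n k : ℕ) (y : ℝ) : pB n k y = (bernsteinPolynomial ℝ n k).eval y := by
  simp [pB, bernsteinPolynomial]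

lemma pB_sum (n : ℕ) (y : ℝ) : ∑ k ∈ Finset.range (n + 1), pB n k y = 1 := by
  simp_rw [pB_eval]
  rw [← Polynomial.eval_finsetSum, bernsteinPolynomial.sum, Polynomial.eval_one]

lemma pB_var (n : ℕ) (y : ℝ) :
    ∑ k ∈ Finset.range (n + 1), ((n:ℝ) * y - k) ^ 2 * pB n k y = n * y * (1 - y) := by
  have h := congrArg (Polynomial.eval y) (bernsteinPolynomial.variance ℝ n)
  simpa [Polynomial.eval_finsetSum, pB_eval] using h

lemma pB_nonneg (n k : ℕ) {y : ℝ} (h0 : 0 ≤ y) (h1 : y ≤ 1) : 0 ≤ pB n k y := by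
  have : 0 ≤ 1 - y := by linarith
  unfold pB; positivity

lemma aFun_props (μ : ℝ) (hμ : 0 < μ) (n : ℕ) (hn : 0 < n) {x : ℝ}
    (hx : x ∈ Set.Icc (0:ℝ) 1) : x ≤ aFun μ n x ∧ aFun μ n x ≤ 1 := by
  obtain ⟨h0, h1⟩ := hx
  have hn' : (0:ℝ) < n := by exact_mod_cast hn
  have ht : 0 < 1 / ((n:ℝ) * (1 + μ)) := by positivity
  have hxt : x / ((n:ℝ) * (1 + μ)) = x * (1 / ((n:ℝ) * (1 + μ))) := by ring
  unfold aFun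
  rw [hxt]
  generalize 1 / ((n:ℝ) * (1 + μ)) = t at ht
  have hl : 0 < Real.log (1 + t) := Real.log_pos (by linarith)
  have hxt0 : 0 ≤ x * t := by positivity
  constructor
  · rw [le_div_iff₀ hl, ← Real.log_rpow (by linarith)]
    exact Real.log_le_log (by positivity)
      (rpow_one_add_le_one_add_mul_self (by linarith) h0 h1)
  · rw [div_le_one hl]
    apply Real.log_le_log (by linarith)
    nlinarith

theorem stmt9 (μ : ℝ) (hμ : 0 < μ) (n : ℕ) (hn : 0 < n) (f : ℝ → ℝ)
    (hf : ContinuousOn f (Set.Icc (0:ℝ) 1)) :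
    ∀ x ∈ Set.Icc (0:ℝ) 1,
      |Lop μ n f x - f x| ≤
        Real.log (2 + μ) * modCont (fun t => f t / logμ μ t) (1 / Real.sqrt n) *
          (2 + Real.sqrt n * gammaN μ n) := by
  intro x hx
  have hn' : (0:ℝ) < n := by exact_mod_cast hn
  have hlpos : ∀ t ∈ Set.Icc (0:ℝ) 1, 0 < logμ μ t := fun t ht =>
    Real.log_pos (by linarith [ht.1])
  have hg : ContinuousOn (fun t => f t / logμ μ t) (Set.Icc (0:ℝ) 1) := by
    refine hf.div ?_ (fun t ht => (hlpos t ht).ne')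
    unfold logμ
    refine ContinuousOn.log (by fun_prop) (fun t ht => ?_)
    have := ht.1
    positivity
  set g : ℝ → ℝ := fun t => f t / logμ μ t with hgdef
  obtain ⟨hxa, ha1⟩ := aFun_props μ hμ n hn hx
  have hgam : aFun μ n x - x ≤ gammaN μ n := by
    refine le_csSup ⟨1, ?_⟩ ⟨x, hx, rfl⟩
    rintro d ⟨y, hy, rfl⟩
    have := (aFun_props μ hμ n hn hy).2
    have := hy.1
    simp only
    linarith
  have hL : Lop μ n f x - f x = logμ μ x *
      ∑ k ∈ Finset.range (n + 1), (g ((k:ℝ) / n) - g x) * pB n k (aFun μ n x) := by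
    simp_rw [sub_mul, Finset.sum_sub_distrib]
    rw [← Finset.mul_sum, pB_sum, mul_one, mul_sub]
    unfold Lop
    have : logμ μ x * g x = f x := by
      have := (hlpos x hx).ne'
      simp only [hgdef]; field_simp
    rw [this]
    simp only [hgdef, div_eq_mul_one_div (f _)]
  generalize aFun μ n x = a at *
  have ha0 : 0 ≤ a := hx.1.trans hxa
  set s := Real.sqrt n with hs
  have hs0 : 0 < s := Real.sqrt_pos.mpr hn'
  have hss : s ^ 2 = n := Real.sq_sqrt hn'.le
  set w := modCont g (1 / s) with hw
  have hw0 : 0 ≤ w := mod_nonneg _ _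
  have hsum : |∑ k ∈ Finset.range (n + 1), (g ((k:ℝ) / n) - g x) * pB n k a| ≤
      w * (2 + s * gammaN μ n) := by
    calc _ ≤ ∑ k ∈ Finset.range (n + 1), |(g ((k:ℝ) / n) - g x) * pB n k a| :=
          Finset.abs_sum_le_sum_abs _ _
      _ ≤ ∑ k ∈ Finset.range (n + 1), (w * (3 / 2 + s * gammaN μ n) * pB n k a
            + w / (2 * n) * (((n:ℝ) * a - k) ^ 2 * pB n k a)) := by
          refine Finset.sum_le_sum fun k hk => ?_
          have hp := pB_nonneg n k ha0 ha1
          have hk' : (k:ℝ) ≤ n := by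
            exact_mod_cast Nat.lt_succ_iff.mp (Finset.mem_range.mp hk)
          have hkI : (k:ℝ) / n ∈ Set.Icc (0:ℝ) 1 :=
            ⟨by positivity, by rw [div_le_one hn']; exact hk'⟩
          rw [abs_mul, abs_of_nonneg hp]
          have h1 := mod_real g hg s hs0 hkI hx
          have h2 : |(k:ℝ) / n - x| ≤ |(k:ℝ) / n - a| + gammaN μ n := by
            have := abs_sub_le ((k:ℝ) / n) a x
            rw [abs_of_nonneg (sub_nonneg.mpr hxa)] at this
            linarith
          have h3 : s * |(k:ℝ) / n - a| ≤ 1 / 2 + 1 / (2 * n) * ((n:ℝ) * a - k) ^ 2 := by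
            have e : 1 / (2 * n) * ((n:ℝ) * a - k) ^ 2 = (s * |(k:ℝ) / n - a|) ^ 2 / 2 := by
              rw [mul_pow, sq_abs, hss]; field_simp; ring
            rw [e]
            nlinarith [sq_nonneg (s * |(k:ℝ) / n - a| - 1)]
          have h4 : 1 + s * |(k:ℝ) / n - x| ≤
              3 / 2 + s * gammaN μ n + 1 / (2 * n) * ((n:ℝ) * a - k) ^ 2 := by
            have := mul_le_mul_of_nonneg_left h2 hs0.le
            linarith
          calc _ ≤ ((1 + s * |(k:ℝ) / n - x|) * w) * pB n k a := by gcongr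
            _ ≤ ((3 / 2 + s * gammaN μ n + 1 / (2 * n) * ((n:ℝ) * a - k) ^ 2) * w)
                * pB n k a := by gcongr
            _ = _ := by ring
      _ = w * (3 / 2 + s * gammaN μ n) + w * (a * (1 - a) / 2) := by
          rw [Finset.sum_add_distrib, ← Finset.mul_sum, ← Finset.mul_sum, pB_sum, pB_var]
          field_simp
      _ ≤ _ := by nlinarith [sq_nonneg a, mul_nonneg hw0 (sq_nonneg a), mul_nonneg hw0 (sub_nonneg.mpr ha1)]
  rw [hL, abs_mul, abs_of_pos (hlpos x hx), mul_assoc]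
  refine mul_le_mul ?_ hsum (abs_nonneg _) (Real.log_nonneg (by linarith))
  have := hx.1
  exact Real.log_le_log (by positivity) (by linarith [hx.2])
end

section
/- (Saturation theorem) Let μ > 0 and let f : [0,1] → ℝ be continuous. Then |L_n(f, x) − f(x)| = o(1/n) as n → ∞ for every x ∈ (0,1) if and only if f is a classical solution on (0,1) of the second-order differential equation f_μ'(x) + (1+μ) f_μ''(x) = 0, where f_μ(t) := f(t)/ln(1+μ+t); that is, if and only if f_μ is twice differentiable on (0,1) with f_μ'(x) + (1+μ) f_μ''(x) = 0 for all x ∈ (0,1). -/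
open Real Filter Set

lemma tendsto_log2 (z : ℕ → ℝ) (Z : ℝ)
    (hz : Tendsto (fun n : ℕ => (n : ℝ) * z n) atTop (nhds Z)) :
    Tendsto (fun n : ℕ => (n : ℝ) ^ 2 * (Real.log (1 + z n) - z n)) atTop (nhds (-Z ^ 2 / 2)) := by
  have hinv : Tendsto (fun n : ℕ => ((n : ℝ))⁻¹) atTop (nhds 0) :=
    tendsto_inv_atTop_nhds_zero_nat
  have hz0 : Tendsto z atTop (nhds 0) := by
    have h := hinv.mul hz
    rw [zero_mul] at h
    refine h.congr' ?_
    filter_upwards [eventually_ge_atTop 1] with n hn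
    have : (n : ℝ) ≠ 0 := by positivity
    field_simp
  have habs : Tendsto (fun n => |z n|) atTop (nhds 0) := by simpa using hz0.abs
  have hb : Tendsto (fun n : ℕ => ((n : ℝ) * z n) ^ 2 * (|z n| / (1 - |z n|))) atTop (nhds 0) := by
    have h1 : Tendsto (fun n => |z n| / (1 - |z n|)) atTop (nhds (0 / (1 - 0))) :=
      habs.div (tendsto_const_nhds.sub habs) (by norm_num)
    have h := (hz.pow 2).mul h1
    simpa using h
  have hd : Tendsto (fun n : ℕ => (n : ℝ) ^ 2 * (Real.log (1 + z n) - z n + z n ^ 2 / 2))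
      atTop (nhds 0) := by
    refine squeeze_zero_norm' ?_ hb
    filter_upwards [habs.eventually (gt_mem_nhds (show (0:ℝ) < 1 by norm_num))] with n hn
    have h := Real.abs_log_sub_add_sum_range_le (x := - z n) (by simpa using hn) 2
    simp [Finset.sum_range_succ] at h
    rw [Real.norm_eq_abs, abs_mul, abs_of_nonneg (by positivity : (0:ℝ) ≤ (n : ℝ) ^ 2)]
    calc (n : ℝ) ^ 2 * |Real.log (1 + z n) - z n + z n ^ 2 / 2|
        ≤ (n : ℝ) ^ 2 * (|z n| ^ 3 / (1 - |z n|)) := by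
          gcongr
          have e : Real.log (1 + z n) - z n + z n ^ 2 / 2 = -z n + z n ^ 2 / (1 + 1) + Real.log (1 + z n) := by ring
          rw [e]
          exact h
      _ = ((n : ℝ) * z n) ^ 2 * (|z n| / (1 - |z n|)) := by
          rw [mul_pow, ← sq_abs (z n)]; ring
  have h := hd.sub ((hz.pow 2).div_const 2)
  refine (h.congr ?_).trans_eq ?_
  · intro n; ring
  · congr 1; ring

lemma tendsto_exp2 (c : ℝ) (hc : |c| ≤ 1) :
    Tendsto (fun n : ℕ => (n : ℝ) ^ 2 * (Real.exp (-c / n) - 1 + c / n)) atTop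
      (nhds (c ^ 2 / 2)) := by
  have hinv : Tendsto (fun n : ℕ => ((n : ℝ))⁻¹) atTop (nhds 0) :=
    tendsto_inv_atTop_nhds_zero_nat
  have hd : Tendsto (fun n : ℕ => (n : ℝ) ^ 2 *
      (Real.exp (-c / n) - 1 + c / n - (c / n) ^ 2 / 2)) atTop (nhds 0) := by
    refine squeeze_zero_norm' ?_ hinv
    filter_upwards [eventually_ge_atTop 1] with n hn
    have hn1 : (1:ℝ) ≤ n := by exact_mod_cast hn
    have hn0 : (0:ℝ) < n := by linarith
    have hle : |-c / (n:ℝ)| ≤ (n:ℝ)⁻¹ := by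
      rw [abs_div, abs_neg, abs_of_pos hn0, div_eq_mul_inv]
      exact mul_le_of_le_one_left (by positivity) hc
    have hle1 : |-c / (n:ℝ)| ≤ 1 := hle.trans (inv_le_one_of_one_le₀ hn1)
    have h := Real.exp_bound hle1 (n := 3) (by norm_num)
    simp only [Finset.sum_range_succ, Finset.sum_range_zero] at h
    rw [Real.norm_eq_abs, abs_mul, abs_of_nonneg (by positivity : (0:ℝ) ≤ (n : ℝ) ^ 2)]
    calc (n : ℝ) ^ 2 * |Real.exp (-c / n) - 1 + c / n - (c / n) ^ 2 / 2|
        ≤ (n : ℝ) ^ 2 * (((n:ℝ)⁻¹) ^ 3 * 1) := by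
          gcongr
          refine le_trans (le_of_eq ?_) (h.trans ?_)
          · congr 1
            norm_num [Nat.factorial]
            ring
          · gcongr
            norm_num [Nat.factorial]
      _ = (n:ℝ)⁻¹ := by field_simp
  have h := hd.add_const (c ^ 2 / 2)
  rw [zero_add] at h
  refine h.congr' ?_
  filter_upwards [eventually_ge_atTop 1] with n hn
  have : (n : ℝ) ≠ 0 := by positivity
  field_simp
  ring

lemma tendsto_aFun (μ : ℝ) (hμ : 0 < μ) (x : ℝ) :
    Tendsto (fun n : ℕ => (n : ℝ) * (aFun μ n x - x)) atTop
      (nhds ((1 + μ)⁻¹ * (x * (1 - x)) / 2)) := by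
  set c := (1 + μ)⁻¹ with hcdef
  have hc : 0 < c := by positivity
  have key : ∀ y : ℝ, Tendsto (fun n : ℕ => (n : ℝ) * (y / (n * (1 + μ)))) atTop
      (nhds (y * c)) := by
    intro y
    refine tendsto_const_nhds.congr' ?_
    filter_upwards [eventually_ge_atTop 1] with n hn
    have : (n : ℝ) ≠ 0 := by positivity
    rw [hcdef]; field_simp
  have hx := tendsto_log2 _ _ (key x)
  have h1 := tendsto_log2 _ _ (key 1)
  have hinv : Tendsto (fun n : ℕ => ((n : ℝ))⁻¹) atTop (nhds 0) :=
    tendsto_inv_atTop_nhds_zero_nat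
  have hden : Tendsto (fun n : ℕ => (n : ℝ) * Real.log (1 + 1 / (n * (1 + μ)))) atTop
      (nhds c) := by
    have h := (hinv.mul h1).add (key 1)
    rw [zero_mul, zero_add, one_mul] at h
    refine h.congr' ?_
    filter_upwards [eventually_ge_atTop 1] with n hn
    have : (n : ℝ) ≠ 0 := by positivity
    field_simp
    ring
  have h := (hx.sub (h1.const_mul x)).div hden hc.ne'
  refine (h.congr' ?_).trans_eq ?_
  · filter_upwards [eventually_ge_atTop 1] with n hn
    have hn0 : (0 : ℝ) < n := by positivity
    have hl : Real.log (1 + 1 / (n * (1 + μ))) ≠ 0 := by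
      apply (Real.log_pos _).ne'
      have : 0 < 1 / ((n:ℝ) * (1 + μ)) := by positivity
      linarith
    simp only [aFun, Pi.div_apply]
    set l1 := Real.log (1 + 1 / (n * (1 + μ)))
    set lx := Real.log (1 + x / (n * (1 + μ)))
    have hm : (1 + μ) ≠ 0 := by positivity
    field_simp
    ring
  · congr 1
    field_simp
    ring

lemma tendsto_aFun' (μ : ℝ) (hμ : 0 < μ) (x : ℝ) :
    Tendsto (fun n : ℕ => aFun μ n x) atTop (nhds x) := by
  have hinv : Tendsto (fun n : ℕ => ((n : ℝ))⁻¹) atTop (nhds 0) :=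
    tendsto_inv_atTop_nhds_zero_nat
  have h := (hinv.mul (tendsto_aFun μ hμ x)).add_const x
  rw [zero_mul, zero_add] at h
  refine h.congr' ?_
  filter_upwards [eventually_ge_atTop 1] with n hn
  have : (n : ℝ) ≠ 0 := by positivity
  field_simp
  ring

lemma aFun_mem (μ : ℝ) (hμ : 0 < μ) (x : ℝ) (hx : x ∈ Set.Ioo (0:ℝ) 1) (n : ℕ) (hn : 1 ≤ n) :
    aFun μ n x ∈ Set.Icc (0:ℝ) 1 := by
  have hN : (0:ℝ) < n * (1 + μ) := by positivity
  have h1 : 0 < x / (n * (1 + μ)) := div_pos hx.1 hN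
  have h2 : x / (n * (1 + μ)) ≤ 1 / (n * (1 + μ)) := by
    have := hx.2.le
    gcongr
  have h3 : 0 < Real.log (1 + 1 / (n * (1 + μ))) := Real.log_pos (by linarith)
  refine ⟨div_nonneg (Real.log_nonneg (by linarith)) h3.le, ?_⟩
  rw [aFun, div_le_one h3]
  exact Real.log_le_log (by linarith) (by linarith)

lemma Bop_add (n : ℕ) (g h : ℝ → ℝ) (y : ℝ) :
    Bop n (fun t => g t + h t) y = Bop n g y + Bop n h y := by
  simp [Bop, add_mul, Finset.sum_add_distrib]

lemma Bop_smul (n : ℕ) (A : ℝ) (g : ℝ → ℝ) (y : ℝ) :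
    Bop n (fun t => A * g t) y = A * Bop n g y := by
  simp [Bop, mul_assoc, Finset.mul_sum]

lemma Bop_exp (n : ℕ) (c y : ℝ) :
    Bop n (fun t => Real.exp (-c * t)) y = (1 - y * (1 - Real.exp (-c / n))) ^ n := by
  have e : 1 - y * (1 - Real.exp (-c / n)) = y * Real.exp (-c / n) + (1 - y) := by ring
  rw [e, add_pow, Bop]
  refine Finset.sum_congr rfl fun k _ => ?_
  rw [mul_pow, ← Real.exp_nat_mul, pB, show -c * ((k:ℝ) / n) = k * (-c / n) by ring]
  ring

lemma Bop_one (n : ℕ) (y : ℝ) : Bop n (fun _ => 1) y = 1 := by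
  have := Bop_exp n 0 y
  simpa using this

lemma Bop_id (n : ℕ) (hn : 1 ≤ n) (y : ℝ) : Bop n (fun t => t) y = y := by
  obtain ⟨m, rfl⟩ : ∃ m, n = m + 1 := ⟨n - 1, by omega⟩
  have h1 := Bop_one m y
  rw [Bop] at h1
  rw [Bop, Finset.sum_range_succ']
  simp only [Nat.cast_zero, zero_div, zero_mul, add_zero]
  conv_rhs => rw [← mul_one y, ← h1, Finset.mul_sum]
  refine Finset.sum_congr rfl fun k hk => ?_
  have hc : ((m + 1 : ℕ) : ℝ) * (m.choose k) = ((m+1).choose (k+1) : ℝ) * ((k + 1 : ℕ) : ℝ) := by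
    exact_mod_cast Nat.add_one_mul_choose_eq m k
  have h0 : ((m + 1 : ℕ) : ℝ) ≠ 0 := by positivity
  rw [pB, pB, Nat.add_sub_add_right, pow_succ]
  field_simp
  linear_combination (-(1-y)^(m-k) * y * y^k) * hc

lemma Bop_mono (n : ℕ) (g h : ℝ → ℝ) (y : ℝ) (hy : y ∈ Set.Icc (0:ℝ) 1) (hn : 1 ≤ n)
    (hgh : ∀ t ∈ Set.Icc (0:ℝ) 1, g t ≤ h t) : Bop n g y ≤ Bop n h y := by
  refine Finset.sum_le_sum fun k hk => ?_
  have h1 : 0 ≤ 1 - y := by linarith [hy.2]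
  have h0 := hy.1
  have hp : 0 ≤ pB n k y := by unfold pB; positivity
  refine mul_le_mul_of_nonneg_right (hgh _ ⟨by positivity, ?_⟩) hp
  have : (k:ℝ) ≤ n := by exact_mod_cast (Nat.lt_succ_iff.1 (Finset.mem_range.1 hk))
  exact div_le_one_of_le₀ this (by positivity)

lemma Bop_congr (n : ℕ) (g h : ℝ → ℝ) (y : ℝ)
    (hgh : ∀ t ∈ Set.Icc (0:ℝ) 1, g t = h t) : Bop n g y = Bop n h y := by
  refine Finset.sum_congr rfl fun k hk => ?_
  have : (k:ℝ) ≤ n := by exact_mod_cast (Nat.lt_succ_iff.1 (Finset.mem_range.1 hk))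
  rw [hgh _ ⟨by positivity, div_le_one_of_le₀ this (by positivity)⟩]

lemma Lop_eq (μ : ℝ) (n : ℕ) (f : ℝ → ℝ) (x : ℝ) :
    Lop μ n f x = logμ μ x * Bop n (fun t => f t / logμ μ t) (aFun μ n x) := by
  simp [Lop, Bop, div_eq_mul_inv]

lemma tendsto_exp_aux (w : ℕ → ℝ)
    (hw : Tendsto (fun n : ℕ => (n : ℝ) * w n) atTop (nhds 0)) :
    Tendsto (fun n : ℕ => (n : ℝ) * (Real.exp (w n) - 1)) atTop (nhds 0) := by
  have hinv : Tendsto (fun n : ℕ => ((n : ℝ))⁻¹) atTop (nhds 0) :=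
    tendsto_inv_atTop_nhds_zero_nat
  have hw0 : Tendsto w atTop (nhds 0) := by
    have h := hinv.mul hw
    rw [zero_mul] at h
    refine h.congr' ?_
    filter_upwards [eventually_ge_atTop 1] with n hn
    have : (n : ℝ) ≠ 0 := by positivity
    field_simp
  have hwa : Tendsto (fun n => |w n|) atTop (nhds 0) := by simpa using hw0.abs
  have hb : Tendsto (fun n : ℕ => 2 * |(n : ℝ) * w n|) atTop (nhds 0) := by
    simpa using hw.abs.const_mul 2
  refine squeeze_zero_norm' ?_ hb
  filter_upwards [hwa.eventually (gt_mem_nhds (show (0:ℝ) < 1 by norm_num))] with n hn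
  have := Real.abs_exp_sub_one_le hn.le
  rw [Real.norm_eq_abs, abs_mul, abs_mul]
  nlinarith [abs_nonneg (n : ℝ)]

lemma tendsto_Bop_exp (μ : ℝ) (hμ : 0 < μ) (x : ℝ) :
    Tendsto (fun n : ℕ => (n : ℝ) * (Bop n (fun t => Real.exp (-(1 + μ)⁻¹ * t)) (aFun μ n x)
      - Real.exp (-(1 + μ)⁻¹ * x))) atTop (nhds 0) := by
  have hA := tendsto_aFun μ hμ x
  have ha := tendsto_aFun' μ hμ x
  have hc : 0 < (1 + μ)⁻¹ := by positivity
  have hc1 : (1 + μ)⁻¹ ≤ 1 := inv_le_one_of_one_le₀ (by linarith)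
  generalize (1 + μ)⁻¹ = c at *
  have he := tendsto_exp2 c (by rw [abs_of_pos hc]; exact hc1)
  have hinv : Tendsto (fun n : ℕ => ((n : ℝ))⁻¹) atTop (nhds 0) :=
    tendsto_inv_atTop_nhds_zero_nat
  set z : ℕ → ℝ := fun n => - (aFun μ n x * (1 - Real.exp (-c / n))) with hzdef
  -- n (n z + c x) → c² x² / 2
  have hz1 : Tendsto (fun n : ℕ => (n : ℝ) * (n * z n + c * x)) atTop (nhds (c ^ 2 * x ^ 2 / 2)) := by
    have h := (hA.const_mul (-c)).add (ha.mul he)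
    refine (h.congr' ?_).trans_eq ?_
    · filter_upwards [eventually_ge_atTop 1] with n hn
      have : (n : ℝ) ≠ 0 := by positivity
      simp only [hzdef]
      field_simp
      ring
    · congr 1; ring
  have hz : Tendsto (fun n : ℕ => (n : ℝ) * z n) atTop (nhds (-(c * x))) := by
    have h := (hinv.mul hz1).sub_const (c * x)
    rw [zero_mul, zero_sub] at h
    refine h.congr' ?_
    filter_upwards [eventually_ge_atTop 1] with n hn
    have : (n : ℝ) ≠ 0 := by positivity
    field_simp
    ring
  have hl := tendsto_log2 z _ hz
  have hw : Tendsto (fun n : ℕ => (n : ℝ) * (n * Real.log (1 + z n) + c * x)) atTop (nhds 0) := by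
    refine ((hl.add hz1).congr ?_).trans_eq ?_
    · intro n; ring
    · congr 1; ring
  have hz0 : Tendsto z atTop (nhds 0) := by
    have h := hinv.mul hz
    rw [zero_mul] at h
    refine h.congr' ?_
    filter_upwards [eventually_ge_atTop 1] with n hn
    have : (n : ℝ) ≠ 0 := by positivity
    field_simp
  have h := (tendsto_exp_aux _ hw).const_mul (Real.exp (-c * x))
  rw [mul_zero] at h
  refine h.congr' ?_
  filter_upwards [hz0.eventually (lt_mem_nhds (show (-1:ℝ) < 0 by norm_num))] with n hn
  have hpos : 0 < 1 + z n := by linarith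
  rw [Bop_exp, show 1 - aFun μ n x * (1 - Real.exp (-c / n)) = 1 + z n by simp only [hzdef]; ring]
  rw [Real.exp_add, Real.exp_nat_mul, Real.exp_log hpos,
    show -c * x = -(c * x) by ring, Real.exp_neg]
  have := (Real.exp_pos (c * x)).ne'
  field_simp

lemma tendsto_Bop_sol (μ : ℝ) (hμ : 0 < μ) (x A B : ℝ) :
    Tendsto (fun n : ℕ => (n : ℝ) *
      (Bop n (fun t => A + B * Real.exp (-(1 + μ)⁻¹ * t)) (aFun μ n x)
      - (A + B * Real.exp (-(1 + μ)⁻¹ * x)))) atTop (nhds 0) := by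
  have h := (tendsto_Bop_exp μ hμ x).const_mul B
  rw [mul_zero] at h
  refine h.congr fun n => ?_
  rw [Bop_add n (fun _ => A), Bop_smul]
  have : Bop n (fun _ => A) (aFun μ n x) = A := by
    have := Bop_smul n A (fun _ => 1) (aFun μ n x)
    rw [Bop_one] at this
    simpa using this
  rw [this]; ring

/-- Maximum principle. -/
lemma max_principle (μ : ℝ) (hμ : 0 < μ) (G : ℝ → ℝ) (hG : ContinuousOn G (Set.Icc 0 1))
    (h0 : G 0 = 0) (h1 : G 1 = 0)
    (hlim : ∀ x ∈ Set.Ioo (0:ℝ) 1, Tendsto (fun n : ℕ => (n : ℝ) *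
      (Bop n G (aFun μ n x) - G x)) atTop (nhds 0)) :
    ∀ x ∈ Set.Icc (0:ℝ) 1, G x ≤ 0 := by
  intro x₀ hx₀
  by_contra! hpos
  set ε := G x₀ / 2 with hε
  have hεpos : 0 < ε := by positivity
  have hcont : ContinuousOn (fun t => G t + ε * t) (Set.Icc 0 1) := by fun_prop
  obtain ⟨ξ, hξ, hmax⟩ := isCompact_Icc.exists_isMaxOn ⟨x₀, hx₀⟩ hcont
  have hm : ∀ t ∈ Set.Icc (0:ℝ) 1, G t + ε * t ≤ G ξ + ε * ξ := fun t ht => hmax ht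
  have hx := hm x₀ hx₀
  have hx0 : 0 ≤ ε * x₀ := mul_nonneg hεpos.le hx₀.1
  have hξ0 : ξ ≠ 0 := by
    rintro rfl
    rw [h0] at hx; linarith
  have hξ1 : ξ ≠ 1 := by
    rintro rfl
    rw [h1] at hx; linarith
  have hξ' : ξ ∈ Set.Ioo (0:ℝ) 1 := ⟨lt_of_le_of_ne hξ.1 hξ0.symm, lt_of_le_of_ne hξ.2 hξ1⟩
  have hl := hlim ξ hξ'
  have hr := (tendsto_aFun μ hμ ξ).const_mul (-ε)
  have hle := le_of_tendsto_of_tendsto hl hr (by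
    filter_upwards [eventually_ge_atTop 1] with n hn
    have hb := Bop_mono n G (fun t => (G ξ + ε * ξ) * 1 + (-ε) * t) (aFun μ n ξ)
      (aFun_mem μ hμ ξ hξ' n hn) hn (fun t ht => by have := hm t ht; linarith)
    rw [Bop_add n (fun _ => (G ξ + ε * ξ) * 1), Bop_smul, Bop_smul, Bop_one, Bop_id n hn] at hb
    have hn0 : (0:ℝ) ≤ n := by positivity
    calc (n:ℝ) * (Bop n G (aFun μ n ξ) - G ξ) ≤ n * (-ε * (aFun μ n ξ - ξ)) := by
          gcongr; linarith
      _ = _ := by ring)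
  have h2 : 0 < 1 - ξ := by linarith [hξ'.2]
  have h3 := hξ'.1
  have : 0 < ε * ((1 + μ)⁻¹ * (ξ * (1 - ξ)) / 2) := by positivity
  linarith

lemma sol_of_lim (μ : ℝ) (hμ : 0 < μ) (g : ℝ → ℝ) (hg : ContinuousOn g (Set.Icc 0 1))
    (hlim : ∀ x ∈ Set.Ioo (0:ℝ) 1, Tendsto (fun n : ℕ => (n : ℝ) *
      (Bop n g (aFun μ n x) - g x)) atTop (nhds 0)) :
    ∃ A B : ℝ, ∀ x ∈ Set.Icc (0:ℝ) 1, g x = A + B * Real.exp (-(1 + μ)⁻¹ * x) := by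
  have hc : 0 < (1 + μ)⁻¹ := by positivity
  set E := Real.exp (-(1 + μ)⁻¹) with hE
  have hE1 : E < 1 := by rw [hE, Real.exp_lt_one_iff]; linarith
  have hE2 : E - 1 ≠ 0 := by linarith
  set B := (g 1 - g 0) / (E - 1) with hB
  have hBE : B * (E - 1) = g 1 - g 0 := by rw [hB]; field_simp
  set A := g 0 - B with hA
  refine ⟨A, B, ?_⟩
  have main : ∀ s : ℝ, ∀ x ∈ Set.Icc (0:ℝ) 1,
      s * (g x + ((-A) + (-B) * Real.exp (-(1 + μ)⁻¹ * x))) ≤ 0 := by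
    intro s
    refine max_principle μ hμ (fun x => s * (g x + ((-A) + (-B) * Real.exp (-(1 + μ)⁻¹ * x))))
      ?_ ?_ ?_ ?_
    · fun_prop
    · simp only [mul_zero, Real.exp_zero, hA]
      ring
    · simp only [mul_one, ← hE]
      rw [hA]
      linear_combination (-s) * hBE
    · intro x hx
      have h := ((hlim x hx).add (tendsto_Bop_sol μ hμ x (-A) (-B))).const_mul s
      simp only [add_zero, mul_zero] at h
      refine h.congr fun n => ?_
      rw [Bop_smul, Bop_add n g]
      ring
  intro x hx
  have h1 := main 1 x hx
  have h2 := main (-1) x hx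
  linarith

lemma sol_of_ode (μ : ℝ) (hμ : 0 < μ) (g : ℝ → ℝ) (hg : ContinuousOn g (Set.Icc 0 1))
    (h : ∀ x ∈ Set.Ioo (0:ℝ) 1, DifferentiableAt ℝ g x ∧ DifferentiableAt ℝ (deriv g) x ∧
      deriv g x + (1 + μ) * deriv (deriv g) x = 0) :
    ∃ A B : ℝ, ∀ x ∈ Set.Icc (0:ℝ) 1, g x = A + B * Real.exp (-(1 + μ)⁻¹ * x) := by
  have hm : (1 + μ) ≠ 0 := by positivity
  set c := (1 + μ)⁻¹ with hc
  have hcm : c * (1 + μ) = 1 := by rw [hc]; field_simp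
  have hexp : ∀ (a x : ℝ), HasDerivAt (fun t => Real.exp (a * t)) (Real.exp (a * x) * a) x := by
    intro a x
    simpa using ((hasDerivAt_id x).const_mul a).exp
  have const : ∀ F : ℝ → ℝ, (∀ x ∈ Set.Ioo (0:ℝ) 1, HasDerivAt F 0 x) →
      ∃ K, ∀ x ∈ Set.Ioo (0:ℝ) 1, F x = K := by
    intro F hF
    refine ⟨F (1/2), fun x hx => ?_⟩
    exact isOpen_Ioo.is_const_of_deriv_eq_zero isPreconnected_Ioo
      (fun y hy => (hF y hy).differentiableAt.differentiableWithinAt)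
      (fun y hy => (hF y hy).deriv) hx (by norm_num)
  obtain ⟨K, hK⟩ := const (fun t => deriv g t * Real.exp (c * t)) (by
    intro x hx
    obtain ⟨-, h2, h3⟩ := h x hx
    have hd := h2.hasDerivAt.mul (hexp c x)
    refine hd.congr_deriv ?_
    linear_combination (c * Real.exp (c * x)) * h3 - deriv (deriv g) x * Real.exp (c*x) * hcm)
  obtain ⟨A, hA⟩ := const (fun t => g t + K * (1 + μ) * Real.exp (-c * t)) (by
    intro x hx
    obtain ⟨h1, -, -⟩ := h x hx
    have hd := h1.hasDerivAt.add ((hexp (-c) x).const_mul (K * (1 + μ)))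
    refine hd.congr_deriv ?_
    have h4 := hK x hx
    have h5 : Real.exp (c * x) * Real.exp (-c * x) = 1 := by
      rw [← Real.exp_add]; simp
    linear_combination Real.exp (-c * x) * h4 - deriv g x * h5 - K * Real.exp (-c * x) * hcm)
  refine ⟨A, -(K * (1 + μ)), ?_⟩
  have hEq : Set.EqOn g (fun x => A + -(K * (1 + μ)) * Real.exp (-c * x)) (Set.Ioo 0 1) := by
    intro x hx
    have := hA x hx
    change g x = A + -(K * (1 + μ)) * Real.exp (-c * x)
    linarith
  exact hEq.of_subset_closure hg (by fun_prop) Set.Ioo_subset_Icc_self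
    (by rw [closure_Ioo (by norm_num)])

lemma ode_of_sol (μ : ℝ) (hμ : 0 < μ) (g : ℝ → ℝ) (A B : ℝ)
    (h : ∀ x ∈ Set.Icc (0:ℝ) 1, g x = A + B * Real.exp (-(1 + μ)⁻¹ * x)) :
    ∀ x ∈ Set.Ioo (0:ℝ) 1, DifferentiableAt ℝ g x ∧ DifferentiableAt ℝ (deriv g) x ∧
      deriv g x + (1 + μ) * deriv (deriv g) x = 0 := by
  have hm : (1 + μ) ≠ 0 := by positivity
  set c := (1 + μ)⁻¹ with hc
  have hcm : c * (1 + μ) = 1 := by rw [hc]; field_simp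
  have hexp : ∀ (a x : ℝ), HasDerivAt (fun t => Real.exp (a * t)) (Real.exp (a * x) * a) x := by
    intro a x
    simpa using ((hasDerivAt_id x).const_mul a).exp
  have hd1 : ∀ x ∈ Set.Ioo (0:ℝ) 1, HasDerivAt g (B * (Real.exp (-c * x) * (-c))) x := by
    intro x hx
    refine (((hexp (-c) x).const_mul B).const_add A).congr_of_eventuallyEq ?_
    filter_upwards [isOpen_Ioo.mem_nhds hx] with y hy
    exact h y (Set.Ioo_subset_Icc_self hy)
  have hd2 : ∀ x ∈ Set.Ioo (0:ℝ) 1,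
      HasDerivAt (deriv g) (B * (Real.exp (-c * x) * (-c) * (-c))) x := by
    intro x hx
    refine (((hexp (-c) x).mul_const (-c)).const_mul B).congr_of_eventuallyEq ?_
    filter_upwards [isOpen_Ioo.mem_nhds hx] with y hy
    exact (hd1 y hy).deriv
  intro x hx
  refine ⟨(hd1 x hx).differentiableAt, (hd2 x hx).differentiableAt, ?_⟩
  rw [(hd1 x hx).deriv, (hd2 x hx).deriv]
  linear_combination (B * Real.exp (-c * x) * c) * hcm

theorem stmt13 (μ : ℝ) (hμ : 0 < μ) (f : ℝ → ℝ)
    (hf : ContinuousOn f (Set.Icc (0:ℝ) 1)) :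
    (∀ x ∈ Set.Ioo (0:ℝ) 1,
      Tendsto (fun n : ℕ => (n : ℝ) * (Lop μ n f x - f x)) atTop (nhds 0)) ↔
    (∀ x ∈ Set.Ioo (0:ℝ) 1,
      DifferentiableAt ℝ (fun t => f t / logμ μ t) x ∧
      DifferentiableAt ℝ (deriv (fun t => f t / logμ μ t)) x ∧
      deriv (fun t => f t / logμ μ t) x
        + (1 + μ) * deriv (deriv (fun t => f t / logμ μ t)) x = 0) := by
  have hlog : ∀ t ∈ Set.Icc (0:ℝ) 1, 0 < logμ μ t := fun t ht =>
    Real.log_pos (by linarith [ht.1])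
  have hg : ContinuousOn (fun t => f t / logμ μ t) (Set.Icc 0 1) := by
    refine hf.div ?_ (fun t ht => (hlog t ht).ne')
    unfold logμ
    exact ContinuousOn.log (by fun_prop) (fun t ht => by have := ht.1; positivity)
  have hfx : ∀ x ∈ Set.Ioo (0:ℝ) 1, ∀ n : ℕ, (n : ℝ) * (Lop μ n f x - f x) = logμ μ x *
      ((n : ℝ) * (Bop n (fun t => f t / logμ μ t) (aFun μ n x) - f x / logμ μ x)) := by
    intro x hx n
    have := (hlog x (Set.Ioo_subset_Icc_self hx)).ne'
    rw [Lop_eq]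
    field_simp
  constructor
  · intro h
    obtain ⟨A, B, hAB⟩ := sol_of_lim μ hμ _ hg (by
      intro x hx
      have h1 := (h x hx).const_mul (logμ μ x)⁻¹
      rw [mul_zero] at h1
      refine h1.congr fun n => ?_
      have := (hlog x (Set.Ioo_subset_Icc_self hx)).ne'
      rw [hfx x hx, inv_mul_cancel_left₀ this])
    exact ode_of_sol μ hμ _ A B hAB
  · intro h x hx
    obtain ⟨A, B, hAB⟩ := sol_of_ode μ hμ _ hg h
    have h1 := (tendsto_Bop_sol μ hμ x A B).const_mul (logμ μ x)
    rw [mul_zero] at h1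
    refine h1.congr fun n => ?_
    rw [hfx x hx, Bop_congr n _ _ _ hAB, ← hAB x (Set.Ioo_subset_Icc_self hx)]
end
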